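/- arXiv:2201.12359 — 2 statements merged into one kernel-verified Lean document; each statement's English description precedes it below -/
import Mathlib

section
/- Let N ≥ 1 be an integer, p ∈ (0,1), and d an integer with 0 ≤ d ≤ N such that K_d(x;p,N) ≠ 0 for every integer x ∈ {0,1,…,N}. Then for all integers n, m ∈ {0,1,…,N} \ {d}: Σ_{x=0}^{N−1} [w(x;p,N−1)/(K_d(x;p,N)·K_d(x+1;p,N))] · K̂_n^{(1,d)}(x;p,N) · K̂_m^{(1,d)}(x;p,N) = δ_{n,m} · h_n/((n−d)·N·p·(1−p)), where w(x;p,M) = M!/(x!(M−x)!)·p^x·(1−p)^{M−x} and h_n = (−1)^n·(−N)_n·n!·p^n·(1−p)^n. -/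
open Polynomial

/-- Pochhammer symbol `(c)_k = c (c+1) ⋯ (c+k−1)`. -/
noncomputable def poch (c : ℝ) (k : ℕ) : ℝ := ∏ i ∈ Finset.range k, (c + i)

/-- The monic Krawtchouk polynomial
`K_n(x;p,a) = Σ_{j=0}^{n} ((−n)_j (−a+j)_{n−j} / j!) p^{n−j} (−x)_j`,
where `(−x)_j = Π_{i=0}^{j−1} (i − x)` as a polynomial in `x`. -/
noncomputable def kraw (n : ℕ) (p a : ℝ) : Polynomial ℝ :=
  ∑ j ∈ Finset.range (n + 1),
    Polynomial.C (poch (-(n : ℝ)) j * poch (-a + j) (n - j) / (Nat.factorial j) * p ^ (n - j)) *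
      ∏ i ∈ Finset.range j, (Polynomial.C (i : ℝ) - Polynomial.X)

/-- The type-1 exceptional Krawtchouk polynomial
`K̂_n^{(1,d)}(x;p,N) = (K_d(x;p,N) K_n(x+1;p,N) − K_d(x+1;p,N) K_n(x;p,N))/(n−d)`. -/
noncomputable def xkraw1 (d n : ℕ) (p N : ℝ) : Polynomial ℝ :=
  Polynomial.C (1 / ((n : ℝ) - (d : ℝ))) *
    (kraw d p N * (kraw n p N).comp (Polynomial.X + 1) -
      (kraw d p N).comp (Polynomial.X + 1) * kraw n p N)

noncomputable def kphi (j : ℕ) (x : ℝ) : ℝ := ∏ i ∈ Finset.range j, ((i : ℝ) - x)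

noncomputable def kc (n : ℕ) (p a : ℝ) (j : ℕ) : ℝ :=
  poch (-(n : ℝ)) j * poch (-a + j) (n - j) / (Nat.factorial j) * p ^ (n - j)

noncomputable def kf (n : ℕ) (p a x : ℝ) : ℝ :=
  ∑ j ∈ Finset.range (n + 1), kc n p a j * kphi j x

lemma eval_kraw (n : ℕ) (p a x : ℝ) : (kraw n p a).eval x = kf n p a x := by
  simp [kraw, kf, kc, kphi, Polynomial.eval_finsetSum, Polynomial.eval_prod]

lemma poch_succ' (c : ℝ) (k : ℕ) : poch c (k + 1) = c * poch (c + 1) k := by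
  unfold poch
  rw [Finset.prod_range_succ']
  simp only [Nat.cast_zero, add_zero, Nat.cast_add, Nat.cast_one]
  rw [mul_comm]
  congr 1
  apply Finset.prod_congr rfl
  intros; ring

lemma poch_succ (c : ℝ) (k : ℕ) : poch c (k + 1) = poch c k * (c + k) := by
  unfold poch
  rw [Finset.prod_range_succ]

lemma kphi_succ (j : ℕ) (x : ℝ) : kphi (j + 1) x = kphi j x * (j - x) := by
  unfold kphi
  rw [Finset.prod_range_succ]

lemma kphi_succ' (j : ℕ) (x : ℝ) : kphi (j + 1) x = -x * kphi j (x - 1) := by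
  unfold kphi
  rw [Finset.prod_range_succ']
  simp only [Nat.cast_zero, zero_sub, Nat.cast_add, Nat.cast_one]
  rw [mul_comm]
  congr 1
  apply Finset.prod_congr rfl
  intros; ring

lemma kphi_diff (j : ℕ) (x : ℝ) : kphi (j + 1) (x + 1) - kphi (j + 1) x = -(j + 1) * kphi j x := by
  rw [kphi_succ' j (x + 1), kphi_succ j x, add_sub_cancel_right]; ring

lemma kc_rec (n : ℕ) (p a : ℝ) (j : ℕ) (h : j < n) :
    kc n p a j * ((n : ℝ) - j) = kc n p a (j + 1) * (j + 1) * p * (a - j) := by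
  obtain ⟨k, rfl⟩ : ∃ k, n = j + k + 1 := ⟨n - j - 1, by omega⟩
  unfold kc
  rw [show j + k + 1 - j = k + 1 by omega, show j + k + 1 - (j + 1) = k by omega, poch_succ' (-a + j),
    poch_succ, Nat.factorial_succ]
  have h1 : (Nat.factorial j : ℝ) ≠ 0 := by positivity
  have h2 : (j : ℝ) + 1 ≠ 0 := by positivity
  push_cast
  rw [show -a + ((j : ℝ) + 1) = -a + j + 1 by ring]
  field_simp
  ring

lemma kc_shift (n : ℕ) (p a : ℝ) (j : ℕ) :
    kc (n + 1) p a (j + 1) * -(j + 1) = (n + 1) * kc n p (a - 1) j := by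
  unfold kc
  rw [show n + 1 - (j + 1) = n - j by omega, poch_succ', Nat.factorial_succ]
  have h1 : (Nat.factorial j : ℝ) ≠ 0 := by positivity
  have h2 : (j : ℝ) + 1 ≠ 0 := by positivity
  push_cast
  rw [show -a + ((j : ℝ) + 1) = -(a - 1) + j by ring,
    show -((n : ℝ) + 1) + 1 = -n by ring]
  field_simp

lemma kf_forward (n : ℕ) (p a x : ℝ) :
    kf (n + 1) p a (x + 1) - kf (n + 1) p a x = (n + 1) * kf n p (a - 1) x := by
  unfold kf
  rw [← Finset.sum_sub_distrib, Finset.sum_range_succ', Finset.mul_sum]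
  have h0 : kc (n + 1) p a 0 * kphi 0 (x + 1) - kc (n + 1) p a 0 * kphi 0 x = 0 := by
    simp [kphi]
  rw [h0, add_zero]
  apply Finset.sum_congr rfl
  intro j _
  rw [← mul_sub, kphi_diff, ← mul_assoc, kc_shift, mul_assoc]

/-- Difference equation for a basis element. -/
lemma kphi_op (p a : ℝ) (j : ℕ) (x : ℝ) :
    p * (a - x) * (kphi (j + 1) (x + 1) - kphi (j + 1) x)
      - (1 - p) * x * (kphi (j + 1) x - kphi (j + 1) (x - 1))
    = -(j + 1) * kphi (j + 1) x - (j + 1) * p * (a - j) * kphi j x := by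
  have h := kphi_diff j (x - 1)
  rw [sub_add_cancel] at h
  rw [kphi_diff, h]
  have e1 := kphi_succ j x
  have e2 := kphi_succ' j x
  linear_combination (-(j + 1) * p) * e1 * (-1) - (1 - p) * (j + 1) * (-e2)

lemma kf_op_partial (n : ℕ) (p a x : ℝ) (k : ℕ) (hk : k ≤ n) :
    ∑ j ∈ Finset.range (k + 1), kc n p a j *
      (p * (a - x) * (kphi j (x + 1) - kphi j x) - (1 - p) * x * (kphi j x - kphi j (x - 1))
        + n * kphi j x) = kc n p a k * (n - k) * kphi k x := by
  induction k with
  | zero => simp [kphi]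
  | succ k ih =>
    rw [Finset.sum_range_succ, ih (by omega), kphi_op]
    have h := kc_rec n p a k (by omega)
    push_cast
    linear_combination (kphi k x) * h

lemma kf_op (n : ℕ) (p a x : ℝ) :
    p * (a - x) * (kf n p a (x + 1) - kf n p a x)
      - (1 - p) * x * (kf n p a x - kf n p a (x - 1)) = - n * kf n p a x := by
  have h := kf_op_partial n p a x n le_rfl
  rw [sub_self, mul_zero, zero_mul] at h
  have : ∑ j ∈ Finset.range (n + 1), kc n p a j *
      (p * (a - x) * (kphi j (x + 1) - kphi j x) - (1 - p) * x * (kphi j x - kphi j (x - 1))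
        + n * kphi j x) = p * (a - x) * (kf n p a (x + 1) - kf n p a x)
      - (1 - p) * x * (kf n p a x - kf n p a (x - 1)) + n * kf n p a x := by
    unfold kf
    simp only [mul_sub, mul_add, Finset.mul_sum, Finset.sum_add_distrib, Finset.sum_sub_distrib]
    simp only [mul_left_comm]
  linarith

noncomputable def kw (M : ℕ) (p : ℝ) (x : ℕ) : ℝ := (M.choose x : ℝ) * p ^ x * (1 - p) ^ (M - x)

lemma kw_up (M : ℕ) (p : ℝ) (x : ℕ) (hx : x ≤ M) :
    kw (M + 1) p x * (p * ((M + 1 : ℕ) - x)) = (M + 1) * p * (1 - p) * kw M p x := by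
  unfold kw
  have h := Nat.choose_mul_succ_eq M x
  have h' : (M.choose x : ℝ) * (M + 1) = ((M + 1).choose x : ℝ) * ((M + 1 : ℕ) - x) := by
    rw [← Nat.cast_sub (by omega)]
    exact_mod_cast h
  rw [show M + 1 - x = (M - x) + 1 by omega, pow_succ]
  linear_combination (-p * p ^ x * (1 - p) ^ (M - x) * (1 - p)) * h'

lemma kw_down (M : ℕ) (p : ℝ) (x : ℕ) :
    kw (M + 1) p (x + 1) * ((1 - p) * (x + 1)) = (M + 1) * p * (1 - p) * kw M p x := by
  unfold kw
  have h' : ((M : ℝ) + 1) * (M.choose x : ℝ) = ((M + 1).choose (x + 1) : ℝ) * (x + 1) := by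
    exact_mod_cast Nat.add_one_mul_choose_eq M x
  rw [show M + 1 - (x + 1) = M - x by omega, pow_succ]
  linear_combination (-p * p ^ x * (1 - p) ^ (M - x) * (1 - p)) * h'

lemma kparts_aux (M : ℕ) (p : ℝ) (n d : ℕ) (u : ℕ → ℝ) (k : ℕ) (hk : k ≤ M + 1) :
    ((n : ℝ) - d) * ∑ x ∈ Finset.range (k + 1),
      kw (M + 1) p x * kf d p (M + 1 : ℕ) x * kf n p (M + 1 : ℕ) x * u x
    = ∑ x ∈ Finset.range k, (M + 1) * p * (1 - p) * kw M p x *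
        (kf d p (M + 1 : ℕ) x * kf n p (M + 1 : ℕ) (x + 1)
          - kf d p (M + 1 : ℕ) (x + 1) * kf n p (M + 1 : ℕ) x) * (u (x + 1) - u x)
      - kw (M + 1) p k * (p * ((M + 1 : ℕ) - k)) *
        (kf d p (M + 1 : ℕ) k * kf n p (M + 1 : ℕ) (k + 1)
          - kf d p (M + 1 : ℕ) (k + 1) * kf n p (M + 1 : ℕ) k) * u k := by
  induction k with
  | zero =>
    have h1 := kf_op n p (M + 1 : ℕ) 0
    have h2 := kf_op d p (M + 1 : ℕ) 0
    rw [zero_add] at h1 h2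
    simp only [zero_add, Finset.sum_range_one, Finset.sum_range_zero, Nat.cast_zero]
    linear_combination (kw (M + 1) p 0 * u 0 * kf d p (M + 1 : ℕ) 0) * h1
      - (kw (M + 1) p 0 * u 0 * kf n p (M + 1 : ℕ) 0) * h2
  | succ k ih =>
    rw [Finset.sum_range_succ, mul_add, ih (by omega), Finset.sum_range_succ _ k]
    have h1 := kf_op n p (M + 1 : ℕ) (k + 1)
    have h2 := kf_op d p (M + 1 : ℕ) (k + 1)
    have hu := kw_up M p k (by omega)
    have hd := kw_down M p k
    rw [add_sub_cancel_right] at h1 h2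
    rw [hu, ← hd]
    push_cast at *
    generalize kw (M + 1) p (k + 1) = W at *
    linear_combination (W * u (k + 1) * kf d p (M + 1) (k + 1)) * h1
      - (W * u (k + 1) * kf n p (M + 1) (k + 1)) * h2

lemma kparts (M : ℕ) (p : ℝ) (n d : ℕ) (u : ℕ → ℝ) :
    ((n : ℝ) - d) * ∑ x ∈ Finset.range (M + 1 + 1),
      kw (M + 1) p x * kf d p (M + 1 : ℕ) x * kf n p (M + 1 : ℕ) x * u x
    = ∑ x ∈ Finset.range (M + 1), (M + 1) * p * (1 - p) * kw M p x *
        (kf d p (M + 1 : ℕ) x * kf n p (M + 1 : ℕ) (x + 1)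
          - kf d p (M + 1 : ℕ) (x + 1) * kf n p (M + 1 : ℕ) x) * (u (x + 1) - u x) := by
  rw [kparts_aux M p n d u (M + 1) le_rfl]
  simp

lemma kf_zero (p a x : ℝ) : kf 0 p a x = 1 := by
  simp [kf, kc, kphi, poch]

noncomputable def kh (N n : ℕ) (p : ℝ) : ℝ :=
  (-1 : ℝ) ^ n * poch (-(N : ℝ)) n * (n.factorial : ℝ) * p ^ n * (1 - p) ^ n

lemma kh_succ (M n : ℕ) (p : ℝ) :
    kh (M + 1) (n + 1) p = (n + 1) * (M + 1) * p * (1 - p) * kh M n p := by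
  unfold kh
  rw [poch_succ', Nat.factorial_succ]
  push_cast
  rw [show -((M : ℝ) + 1) + 1 = -M by ring]
  ring

lemma knorm (n : ℕ) (p : ℝ) : ∀ N : ℕ, n ≤ N →
    ∑ x ∈ Finset.range (N + 1), kw N p x * kf n p N x * kf n p N x = kh N n p := by
  induction n with
  | zero =>
    intro N _
    simp only [kf_zero, mul_one]
    have h := add_pow p (1 - p) N
    simp only [add_sub_cancel, one_pow] at h
    simp only [kh, kw, poch]
    simp only [pow_zero, Finset.range_zero, Finset.prod_empty, Nat.factorial_zero, Nat.cast_one,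
      mul_one]
    refine Eq.trans (Finset.sum_congr rfl ?_) h.symm
    intros; ring
  | succ n ih =>
    intro N hN
    obtain ⟨M, rfl⟩ : ∃ M, N = M + 1 := ⟨N - 1, by omega⟩
    have h := kparts M p (n + 1) 0 (fun x => kf (n + 1) p (M + 1 : ℕ) x)
    have ihM := ih M (by omega)
    simp only [kf_zero, mul_one, one_mul] at h
    have e : ∀ x : ℕ, kf (n + 1) p (M + 1 : ℕ) (x + 1) - kf (n + 1) p (M + 1 : ℕ) x
        = (n + 1) * kf n p M x := by
      intro x
      rw [kf_forward]; simp
    rw [kh_succ, ← ihM]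
    have hn : (n : ℝ) + 1 ≠ 0 := by positivity
    apply mul_left_cancel₀ hn
    simp only [Nat.cast_add, Nat.cast_one, Nat.cast_zero, sub_zero] at h e ⊢
    rw [h, Finset.mul_sum, Finset.mul_sum]
    apply Finset.sum_congr rfl
    intro x _
    rw [e]; ring

lemma korth (M : ℕ) (p : ℝ) (n m : ℕ) (hn : n ≤ M + 1) :
    ∑ x ∈ Finset.range (M + 1 + 1),
      kw (M + 1) p x * kf n p (M + 1 : ℕ) x * kf m p (M + 1 : ℕ) x
    = if n = m then kh (M + 1) n p else 0 := by
  split_ifs with h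
  · subst h
    exact knorm n p (M + 1) hn
  · have h' := kparts M p m n (fun _ => 1)
    simp only [mul_one, sub_self, mul_zero, Finset.sum_const_zero] at h'
    rcases mul_eq_zero.1 h' with h0 | h0
    · exact absurd (by exact_mod_cast (sub_eq_zero.1 h0).symm) h
    · exact h0

/-- The discrete orthogonality relation for the type-1 exceptional Krawtchouk polynomials:
`Σ_{x=0}^{N−1} [w(x;p,N−1)/(K_d(x) K_d(x+1))] K̂_n^{(1,d)}(x) K̂_m^{(1,d)}(x)
  = δ_{n,m} h_n/((n−d) N p (1−p))`. -/
theorem krawtchouk_exceptional1_orthogonality (N : ℕ) (hN : 1 ≤ N) (p : ℝ)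
    (hp0 : 0 < p) (hp1 : p < 1) (d : ℕ) (hd : d ≤ N)
    (hKd : ∀ x : ℕ, x ≤ N → Polynomial.eval (x : ℝ) (kraw d p (N : ℝ)) ≠ 0)
    (n m : ℕ) (hnN : n ≤ N) (hmN : m ≤ N) (hnd : n ≠ d) (hmd : m ≠ d) :
    ∑ x ∈ Finset.range N,
        (((N - 1).choose x : ℝ) * p ^ x * (1 - p) ^ (N - 1 - x) /
            (Polynomial.eval (x : ℝ) (kraw d p (N : ℝ)) *
              Polynomial.eval ((x : ℝ) + 1) (kraw d p (N : ℝ)))) *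
          Polynomial.eval (x : ℝ) (xkraw1 d n p (N : ℝ)) *
          Polynomial.eval (x : ℝ) (xkraw1 d m p (N : ℝ)) =
      (if n = m then 1 else 0) *
        ((-1 : ℝ) ^ n * poch (-(N : ℝ)) n * (n.factorial : ℝ) * p ^ n * (1 - p) ^ n) /
        (((n : ℝ) - (d : ℝ)) * (N : ℝ) * p * (1 - p)) := by
  obtain ⟨M, rfl⟩ : ∃ M, N = M + 1 := ⟨N - 1, by omega⟩
  have h := kparts M p n d (fun x => kf m p (M + 1 : ℕ) x / kf d p (M + 1 : ℕ) x)
  have ho := korth M p n m hnN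
  have hK : ∀ x : ℕ, x ≤ M + 1 → kf d p (M + 1 : ℕ) x ≠ 0 := by
    intro x hx
    rw [← eval_kraw]; exact hKd x hx
  have hs : ∑ x ∈ Finset.range (M + 1 + 1),
      kw (M + 1) p x * kf d p (M + 1 : ℕ) x * kf n p (M + 1 : ℕ) x *
        (kf m p (M + 1 : ℕ) x / kf d p (M + 1 : ℕ) x)
      = if n = m then kh (M + 1) n p else 0 := by
    rw [← ho]
    apply Finset.sum_congr rfl
    intro x hx
    have := hK x (by have := Finset.mem_range.1 hx; omega)
    field_simp
  rw [hs] at h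
  have hn' : (n : ℝ) - d ≠ 0 := sub_ne_zero.2 (by exact_mod_cast hnd)
  have hm' : (m : ℝ) - d ≠ 0 := sub_ne_zero.2 (by exact_mod_cast hmd)
  have hp' : (1 : ℝ) - p ≠ 0 := by linarith
  have hM' : (M : ℝ) + 1 ≠ 0 := by positivity
  have hp'' : p ≠ 0 := hp0.ne'
  have key : ∑ x ∈ Finset.range (M + 1),
        (((M + 1 - 1).choose x : ℝ) * p ^ x * (1 - p) ^ (M + 1 - 1 - x) /
            (Polynomial.eval (x : ℝ) (kraw d p ((M + 1 : ℕ) : ℝ)) *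
              Polynomial.eval ((x : ℝ) + 1) (kraw d p ((M + 1 : ℕ) : ℝ)))) *
          Polynomial.eval (x : ℝ) (xkraw1 d n p ((M + 1 : ℕ) : ℝ)) *
          Polynomial.eval (x : ℝ) (xkraw1 d m p ((M + 1 : ℕ) : ℝ)) =
      1 / (((n : ℝ) - d) * (m - d) * ((M + 1) * p * (1 - p))) *
        (((n : ℝ) - d) * if n = m then kh (M + 1) n p else 0) := by
    rw [h, Finset.mul_sum]
    apply Finset.sum_congr rfl
    intro x hx
    have hx' := Finset.mem_range.1 hx
    have k1 := hK x (by omega)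
    have k2 := hK (x + 1) (by omega)
    rw [show M + 1 - 1 = M by omega]
    simp only [xkraw1, eval_mul, eval_C, eval_sub, eval_comp, eval_add, eval_X, eval_one,
      eval_kraw]
    change kw M p x / _ * _ * _ = _
    rw [Nat.cast_add x 1, Nat.cast_one] at k2 ⊢
    generalize kf d p (M + 1 : ℕ) x = A at *
    generalize kf d p (M + 1 : ℕ) (x + 1) = B at *
    field_simp
  rw [key]
  by_cases hnm : n = m
  · subst hnm
    simp only [if_true]
    change _ = 1 * kh (M + 1) n p / _
    push_cast
    field_simp
  · simp [hnm]
end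

section
/- Let N ≥ 1 be an integer, p ∈ (0,1), and d ≥ 0 an integer such that P_d(x) := K_d(x−N−1;p,−N−2) ≠ 0 for every integer x ∈ {−1,0,…,N+1}. Then for all integers n, m ∈ {0,1,…,N}: Σ_{x=−1}^{N} [w(x+1;p,N+1)/(P_d(x)·P_d(x+1))] · K̂_n^{(2,d)}(x;p,N) · K̂_m^{(2,d)}(x;p,N) = δ_{n,m} · (N+1)·h_n/(N+d+1−n), where w(x;p,M) = M!/(x!(M−x)!)·p^x·(1−p)^{M−x} and h_n = (−1)^n·(−N)_n·n!·p^n·(1−p)^n. -/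
open Polynomial

/-- The type-2 exceptional Krawtchouk polynomial
`K̂_n^{(2,d)}(x;p,M) = [(M−x) K_d(x−M−1;p,−M−2) K_n(x+1;p,M)
  + (x+1) K_d(x−M;p,−M−2) K_n(x;p,M)]/(M+d+1−n)`. -/
noncomputable def xkraw2 (d n : ℕ) (p M : ℝ) : Polynomial ℝ :=
  Polynomial.C (1 / (M + (d : ℝ) + 1 - (n : ℝ))) *
    ((Polynomial.C M - Polynomial.X) *
        (kraw d p (-M - 2)).comp (Polynomial.X - Polynomial.C (M + 1)) *
        (kraw n p M).comp (Polynomial.X + 1) +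
      (Polynomial.X + 1) * (kraw d p (-M - 2)).comp (Polynomial.X - Polynomial.C M) *
        kraw n p M)

lemma kr_phi_succ (x : ℝ) (j : ℕ) : (∏ i ∈ Finset.range (j+1), ((i:ℝ) - x)) =
    (∏ i ∈ Finset.range j, ((i:ℝ) - x)) * (j - x) := Finset.prod_range_succ _ _

lemma kr_phi_shift (x : ℝ) (j : ℕ) : (∏ i ∈ Finset.range (j+1), ((i:ℝ) - (x+1))) =
    (∏ i ∈ Finset.range j, ((i:ℝ) - x)) * (-x-1) := by
  rw [Finset.prod_range_succ']
  congr 1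
  · apply Finset.prod_congr rfl
    intro i _
    push_cast; ring
  · push_cast; ring

lemma kr_eval (n : ℕ) (p a x : ℝ) : Polynomial.eval x (kraw n p a) =
    ∑ j ∈ Finset.range (n + 1),
    (poch (-(n : ℝ)) j * poch (-a + j) (n - j) / (Nat.factorial j) * p ^ (n - j)) *
      ∏ i ∈ Finset.range j, ((i : ℝ) - x) := by
  simp [kraw, Polynomial.eval_finsetSum, Polynomial.eval_prod]

lemma kr_poch_succ (c : ℝ) (k : ℕ) : poch c (k+1) = poch c k * (c + k) :=
  Finset.prod_range_succ _ _

lemma kr_poch_succ' (c : ℝ) (k : ℕ) : poch c (k+1) = c * poch (c+1) k := by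
  unfold poch
  rw [Finset.prod_range_succ', mul_comm]
  congr 1
  · simp
  · apply Finset.prod_congr rfl
    intro i _
    push_cast; ring

lemma kr_fwd (n : ℕ) (p a x : ℝ) :
    Polynomial.eval (x+1) (kraw (n+1) p a) - Polynomial.eval x (kraw (n+1) p a)
      = (n+1) * Polynomial.eval x (kraw n p (a-1)) := by
  rw [kr_eval, kr_eval, kr_eval, ← Finset.sum_sub_distrib, Finset.sum_range_succ', Finset.mul_sum]
  simp only [Finset.prod_range_zero, sub_self, add_zero]
  apply Finset.sum_congr rfl
  intro j _
  rw [kr_phi_shift, kr_phi_succ, kr_poch_succ', Nat.factorial_succ, Nat.add_sub_add_right]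
  have h1 : (-((n+1 : ℕ):ℝ) + 1) = -n := by push_cast; ring
  have h2 : (-a + ((j+1:ℕ):ℝ)) = -(a-1) + j := by push_cast; ring
  rw [h1, h2]
  have : (j.factorial : ℝ) ≠ 0 := by positivity
  have : ((j:ℝ)+1) ≠ 0 := by positivity
  push_cast
  field_simp
  ring

lemma kr_bwd_phi (x : ℝ) (j : ℕ) : x * (∏ i ∈ Finset.range j, ((i:ℝ) - (x-1))) =
    (x - j) * (∏ i ∈ Finset.range j, ((i:ℝ) - x)) := by
  have h := kr_phi_shift (x-1) j
  rw [sub_add_cancel, kr_phi_succ] at h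
  linarith

/-- Action of the difference operator on the basis. -/
lemma kr_T_phi (p a x : ℝ) (j : ℕ) :
    p * (a - x) * ((∏ i ∈ Finset.range (j+1), ((i:ℝ) - (x+1))) -
        ∏ i ∈ Finset.range (j+1), ((i:ℝ) - x))
     + (1-p) * (x * (∏ i ∈ Finset.range (j+1), ((i:ℝ) - (x-1)))
        - x * ∏ i ∈ Finset.range (j+1), ((i:ℝ) - x))
     = -(j+1) * (∏ i ∈ Finset.range (j+1), ((i:ℝ) - x))
       - (j+1) * p * (a - j) * ∏ i ∈ Finset.range j, ((i:ℝ) - x) := by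
  rw [kr_bwd_phi, kr_phi_shift, kr_phi_succ]
  push_cast
  ring

lemma kr_diff (n : ℕ) (p a x : ℝ) :
    p * (a - x) * Polynomial.eval (x+1) (kraw n p a)
      + (1-p) * x * Polynomial.eval (x-1) (kraw n p a)
      = (p * (a - x) + (1-p) * x - n) * Polynomial.eval x (kraw n p a) := by
  suffices h : p * (a - x) * (Polynomial.eval (x+1) (kraw n p a) - Polynomial.eval x (kraw n p a))
      + (1-p) * (x * Polynomial.eval (x-1) (kraw n p a) - x * Polynomial.eval x (kraw n p a))
      + n * Polynomial.eval x (kraw n p a) = 0 by linarith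
  simp only [kr_eval]
  set c : ℕ → ℝ := fun j =>
    (poch (-(n : ℝ)) j * poch (-a + j) (n - j) / (Nat.factorial j) * p ^ (n - j)) with hc
  have hrec : ∀ j ∈ Finset.range n, (j+1) * p * (a - j) * c (j+1) = (n - j) * c j := by
    intro j hj
    obtain ⟨k, rfl⟩ : ∃ k, n = j + 1 + k := ⟨n - (j+1), by have := Finset.mem_range.1 hj; omega⟩
    simp only [hc]
    have e1 : j + 1 + k - (j+1) = k := by omega
    have e2 : j + 1 + k - j = k + 1 := by omega
    rw [e1, e2, kr_poch_succ, kr_poch_succ' (-a + j), Nat.factorial_succ]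
    have h2 : (-a + ((j+1:ℕ):ℝ)) = -a + j + 1 := by push_cast; ring
    rw [h2]
    have : (j.factorial : ℝ) ≠ 0 := by positivity
    have : ((j:ℝ)+1) ≠ 0 := by positivity
    push_cast
    field_simp
    ring
  change p * (a - x) * ((∑ j ∈ Finset.range (n + 1), c j * ∏ i ∈ Finset.range j, ((i:ℝ) - (x+1)))
      - ∑ j ∈ Finset.range (n + 1), c j * ∏ i ∈ Finset.range j, ((i:ℝ) - x))
      + (1-p) * (x * (∑ j ∈ Finset.range (n + 1), c j * ∏ i ∈ Finset.range j, ((i:ℝ) - (x-1)))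
        - x * ∑ j ∈ Finset.range (n + 1), c j * ∏ i ∈ Finset.range j, ((i:ℝ) - x))
      + n * ∑ j ∈ Finset.range (n + 1), c j * ∏ i ∈ Finset.range j, ((i:ℝ) - x) = 0
  have h1 : p * (a - x) * ((∑ j ∈ Finset.range (n + 1), c j * ∏ i ∈ Finset.range j, ((i:ℝ) - (x+1)))
      - ∑ j ∈ Finset.range (n + 1), c j * ∏ i ∈ Finset.range j, ((i:ℝ) - x))
      + (1-p) * (x * (∑ j ∈ Finset.range (n + 1), c j * ∏ i ∈ Finset.range j, ((i:ℝ) - (x-1)))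
        - x * ∑ j ∈ Finset.range (n + 1), c j * ∏ i ∈ Finset.range j, ((i:ℝ) - x))
      = ∑ j ∈ Finset.range n, (-(j+1) * (c (j+1) * ∏ i ∈ Finset.range (j+1), ((i:ℝ) - x))
          - (n - j) * c j * ∏ i ∈ Finset.range j, ((i:ℝ) - x)) := by
    rw [← Finset.sum_sub_distrib, Finset.mul_sum, Finset.mul_sum, Finset.mul_sum,
      ← Finset.sum_sub_distrib, Finset.mul_sum, ← Finset.sum_add_distrib, Finset.sum_range_succ']
    simp only [Finset.prod_range_zero, sub_self, mul_zero, add_zero]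
    apply Finset.sum_congr rfl
    intro j hj
    have := kr_T_phi p a x j
    have h2 := hrec j hj
    rw [← h2]
    linear_combination c (j+1) * this
  rw [h1, Finset.sum_sub_distrib]
  have h3 : ∑ j ∈ Finset.range n, (-((j:ℝ)+1) * (c (j+1) * ∏ i ∈ Finset.range (j+1), ((i:ℝ) - x)))
      = ∑ j ∈ Finset.range (n+1), (-(j:ℝ) * (c j * ∏ i ∈ Finset.range j, ((i:ℝ) - x))) := by
    rw [Finset.sum_range_succ']; simp
  have h4 : ∑ j ∈ Finset.range n, (((n:ℝ) - j) * c j * ∏ i ∈ Finset.range j, ((i:ℝ) - x))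
      = ∑ j ∈ Finset.range (n+1), (((n:ℝ) - j) * c j * ∏ i ∈ Finset.range j, ((i:ℝ) - x)) := by
    rw [Finset.sum_range_succ]; simp
  rw [h3, h4, Finset.mul_sum, ← Finset.sum_sub_distrib, ← Finset.sum_add_distrib]
  apply Finset.sum_eq_zero
  intro j _
  ring

lemma kr_wsum (N : ℕ) (p : ℝ) (X Y : ℕ → ℝ) :
    ∑ k ∈ Finset.range (N+2), ((N+1).choose k : ℝ) * p^k * (1-p)^(N+1-k) *
      (((N:ℝ)+1-k) * X k + k * Y k)
    = ((N:ℝ)+1) * ∑ k ∈ Finset.range (N+1), (N.choose k : ℝ) * p^k * (1-p)^(N-k) *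
      ((1-p) * X k + p * Y (k+1)) := by
  simp only [mul_add]
  rw [Finset.sum_add_distrib, Finset.sum_add_distrib, mul_add]
  congr 1
  · rw [Finset.sum_range_succ, Finset.mul_sum]
    push_cast
    simp only [sub_self, zero_mul, mul_zero, add_zero]
    apply Finset.sum_congr rfl
    intro k hk
    have hk' : k ≤ N := by have := Finset.mem_range.1 hk; omega
    have h := Nat.choose_mul_succ_eq N k
    have h' : (N.choose k : ℝ) * (N+1) = (N+1).choose k * ((N:ℝ)+1-k) := by
      have h2 : ((N + 1 - k : ℕ):ℝ) = (N:ℝ)+1-k := by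
        rw [Nat.cast_sub (by omega)]; push_cast; ring
      rw [← h2]; exact_mod_cast h
    have e : N + 1 - k = (N - k) + 1 := by omega
    rw [e, pow_succ]
    linear_combination (-(p^k * (1-p)^(N-k) * (1-p) * X k)) * h'
  · rw [Finset.sum_range_succ', Finset.mul_sum]
    simp only [Nat.cast_zero, zero_mul, mul_zero, add_zero]
    apply Finset.sum_congr rfl
    intro k hk
    have h := Nat.add_one_mul_choose_eq N k
    have h' : ((N:ℝ)+1) * N.choose k = (N+1).choose (k+1) * ((k:ℝ)+1) := by exact_mod_cast h
    rw [Nat.add_sub_add_right, pow_succ]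
    push_cast
    linear_combination (-(p^k * p * (1-p)^(N-k) * Y (k+1))) * h'

/-- The binomial inner product of two Krawtchouk polynomials. -/
noncomputable def krIP (N : ℕ) (p : ℝ) (n m : ℕ) : ℝ :=
  ∑ k ∈ Finset.range (N+1), (N.choose k : ℝ) * p^k * (1-p)^(N-k) *
    (Polynomial.eval (k:ℝ) (kraw n p N) * Polynomial.eval (k:ℝ) (kraw m p N))

lemma krIP_comm (N : ℕ) (p : ℝ) (n m : ℕ) : krIP N p n m = krIP N p m n := by
  unfold krIP
  apply Finset.sum_congr rfl
  intro k _
  ring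

lemma krIP_dir (M : ℕ) (p : ℝ) (n m : ℕ) :
    (m:ℝ) * krIP (M+1) p n m = p * (1-p) * (M+1) *
      ∑ k ∈ Finset.range (M+1), (M.choose k : ℝ) * p^k * (1-p)^(M-k) *
      ((Polynomial.eval ((k:ℝ)+1) (kraw n p ((M+1:ℕ):ℝ))
          - Polynomial.eval (k:ℝ) (kraw n p ((M+1:ℕ):ℝ))) *
       (Polynomial.eval ((k:ℝ)+1) (kraw m p ((M+1:ℕ):ℝ))
          - Polynomial.eval (k:ℝ) (kraw m p ((M+1:ℕ):ℝ)))) := by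
  have h := kr_wsum M p
    (fun k => -p * Polynomial.eval (k:ℝ) (kraw n p ((M+1:ℕ):ℝ)) *
      (Polynomial.eval ((k:ℝ)+1) (kraw m p ((M+1:ℕ):ℝ))
          - Polynomial.eval (k:ℝ) (kraw m p ((M+1:ℕ):ℝ))))
    (fun k => -(1-p) * Polynomial.eval (k:ℝ) (kraw n p ((M+1:ℕ):ℝ)) *
      (Polynomial.eval ((k:ℝ)-1) (kraw m p ((M+1:ℕ):ℝ))
          - Polynomial.eval (k:ℝ) (kraw m p ((M+1:ℕ):ℝ))))
  refine Eq.trans (Eq.trans ?_ h) ?_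
  · unfold krIP
    rw [Finset.mul_sum]
    apply Finset.sum_congr rfl
    intro k _
    have hd := kr_diff m p ((M+1:ℕ):ℝ) k
    have hM : ((M+1:ℕ):ℝ) = (M:ℝ)+1 := by push_cast; ring
    rw [hM] at hd ⊢
    linear_combination (((M+1).choose k : ℝ) * p^k * (1-p)^(M+1-k) * Polynomial.eval (k:ℝ) (kraw n p ((M:ℝ)+1))) * hd
  rw [mul_comm (p * (1-p)) ((M:ℝ)+1), mul_assoc]
  congr 1
  rw [Finset.mul_sum]
  apply Finset.sum_congr rfl
  intro k _
  have : ((k+1:ℕ):ℝ) = (k:ℝ)+1 := by push_cast; ring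
  rw [this, add_sub_cancel_right]
  ring

lemma kr_zero (p a x : ℝ) : Polynomial.eval x (kraw 0 p a) = 1 := by
  simp [kr_eval, poch]

lemma krIP_zero (N : ℕ) (p : ℝ) : krIP N p 0 0 = 1 := by
  unfold krIP
  simp only [kr_zero, mul_one]
  have := add_pow p (1-p) N
  rw [add_sub_cancel, one_pow] at this
  refine Eq.trans ?_ this.symm
  apply Finset.sum_congr rfl
  intro k _
  ring

lemma krIP_zero_left (N : ℕ) (p : ℝ) (m : ℕ) (hm : m + 1 ≤ N) : krIP N p 0 (m+1) = 0 := by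
  obtain ⟨M, rfl⟩ : ∃ M, N = M + 1 := ⟨N - 1, by omega⟩
  have h := krIP_dir M p 0 (m+1)
  simp only [kr_zero, sub_self, zero_mul, mul_zero, Finset.sum_const_zero] at h
  have : ((m+1:ℕ):ℝ) ≠ 0 := by positivity
  exact (mul_eq_zero.1 h).resolve_left this

lemma krIP_succ (M : ℕ) (p : ℝ) (n m : ℕ) :
    krIP (M+1) p (n+1) (m+1) = p * (1-p) * (M+1) * (n+1) * krIP M p n m := by
  have h := krIP_dir M p (n+1) (m+1)
  have hM : ((M+1:ℕ):ℝ) - 1 = M := by push_cast; ring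
  simp only [kr_fwd, hM] at h
  have : ((m:ℝ)+1) ≠ 0 := by positivity
  apply mul_left_cancel₀ this
  push_cast at h
  rw [h]
  unfold krIP
  simp only [Finset.mul_sum]
  apply Finset.sum_congr rfl
  intro k _
  ring

lemma krIP_eq (N : ℕ) (p : ℝ) (n m : ℕ) (hn : n ≤ N) (hm : m ≤ N) :
    krIP N p n m = (if n = m then 1 else 0) *
      ((-1 : ℝ) ^ n * poch (-(N : ℝ)) n * (n.factorial : ℝ) * p ^ n * (1 - p) ^ n) := by
  induction n generalizing N m with
  | zero =>
    cases m with
    | zero => simp [krIP_zero, poch]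
    | succ m => simp [krIP_zero_left N p m hm]
  | succ n ih =>
    cases m with
    | zero => rw [krIP_comm]; simp [krIP_zero_left N p n hn]
    | succ m =>
      obtain ⟨M, rfl⟩ : ∃ M, N = M + 1 := ⟨N - 1, by omega⟩
      rw [krIP_succ, ih M m (by omega) (by omega), kr_poch_succ', Nat.factorial_succ]
      have h1 : (-((M+1 : ℕ):ℝ) + 1) = -M := by push_cast; ring
      rw [h1]
      simp only [Nat.add_right_cancel_iff]
      push_cast
      ring

lemma kr_xeval (d n : ℕ) (p M x : ℝ) : Polynomial.eval x (xkraw2 d n p M) =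
    1 / (M + (d : ℝ) + 1 - (n : ℝ)) *
     ((M - x) * Polynomial.eval (x - (M+1)) (kraw d p (-M-2)) * Polynomial.eval (x+1) (kraw n p M)
      + (x+1) * Polynomial.eval (x - M) (kraw d p (-M-2)) * Polynomial.eval x (kraw n p M)) := by
  simp [xkraw2, Polynomial.eval_comp]

lemma kr_Icc_sum (N : ℕ) (f : ℤ → ℝ) : ∑ x ∈ Finset.Icc (-1 : ℤ) (N : ℤ), f x =
    ∑ k ∈ Finset.range (N+2), f ((k:ℤ) - 1) := by
  symm
  apply Finset.sum_bij (fun (k:ℕ) _ => (k:ℤ) - 1)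
  · intro k hk
    have := Finset.mem_range.1 hk
    rw [Finset.mem_Icc]; omega
  · intro a _ b _ h
    have h' : (a:ℤ) - 1 = (b:ℤ) - 1 := h
    omega
  · intro x hx
    rw [Finset.mem_Icc] at hx
    exact ⟨(x+1).toNat, Finset.mem_range.2 (by omega), by omega⟩
  · intro _ _; rfl

/-- The discrete orthogonality relation for the type-2 exceptional Krawtchouk polynomials:
`Σ_{x=−1}^{N} [w(x+1;p,N+1)/(P_d(x) P_d(x+1))] K̂_n^{(2,d)}(x) K̂_m^{(2,d)}(x)
  = δ_{n,m} (N+1) h_n/(N+d+1−n)` with `P_d(x) = K_d(x−N−1;p,−N−2)`. -/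
theorem krawtchouk_exceptional2_orthogonality (N : ℕ) (hN : 1 ≤ N) (p : ℝ)
    (hp0 : 0 < p) (hp1 : p < 1) (d : ℕ)
    (hPd : ∀ x : ℤ, -1 ≤ x → x ≤ (N : ℤ) + 1 →
      Polynomial.eval ((x : ℝ) - N - 1) (kraw d p (-(N : ℝ) - 2)) ≠ 0)
    (n m : ℕ) (hnN : n ≤ N) (hmN : m ≤ N) :
    ∑ x ∈ Finset.Icc (-1 : ℤ) (N : ℤ),
        (((N + 1).choose (x + 1).toNat : ℝ) * p ^ (x + 1).toNat *
              (1 - p) ^ ((N : ℤ) - x).toNat /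
            (Polynomial.eval ((x : ℝ) - N - 1) (kraw d p (-(N : ℝ) - 2)) *
              Polynomial.eval ((x : ℝ) - N) (kraw d p (-(N : ℝ) - 2)))) *
          Polynomial.eval (x : ℝ) (xkraw2 d n p (N : ℝ)) *
          Polynomial.eval (x : ℝ) (xkraw2 d m p (N : ℝ)) =
      (if n = m then 1 else 0) * ((N : ℝ) + 1) *
        ((-1 : ℝ) ^ n * poch (-(N : ℝ)) n * (n.factorial : ℝ) * p ^ n * (1 - p) ^ n) /
        ((N : ℝ) + (d : ℝ) + 1 - (n : ℝ)) := by
  set A : ℝ → ℝ := fun x => Polynomial.eval (x - N - 1) (kraw d p (-(N : ℝ) - 2)) with hA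
  set f : ℝ → ℝ := fun x => Polynomial.eval x (kraw n p N) with hf
  set g : ℝ → ℝ := fun x => Polynomial.eval x (kraw m p N) with hg
  set cn : ℝ := (N : ℝ) + (d : ℝ) + 1 - (n : ℝ) with hcn
  set cm : ℝ := (N : ℝ) + (d : ℝ) + 1 - (m : ℝ) with hcm
  have hcn0 : cn ≠ 0 := by
    have : (n:ℝ) ≤ N := by exact_mod_cast hnN
    have : (0:ℝ) ≤ d := by positivity
    apply ne_of_gt; rw [hcn]; linarith
  have hcm0 : cm ≠ 0 := by
    have : (m:ℝ) ≤ N := by exact_mod_cast hmN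
    have : (0:ℝ) ≤ d := by positivity
    apply ne_of_gt; rw [hcm]; linarith
  let G : ℝ → ℝ := fun k => ((N:ℝ)+1-k) * A (k-1) * g k + k * A k * g (k-1)
  have hA0 : ∀ k : ℕ, k ≤ N + 1 → A k ≠ 0 := by
    intro k hk
    have := hPd (k:ℤ) (by omega) (by omega)
    simpa [hA] using this
  have hA1 : ∀ k : ℕ, k ≤ N + 1 → A ((k:ℝ)-1) ≠ 0 := by
    intro k hk
    have := hPd ((k:ℤ)-1) (by omega) (by omega)
    simpa [hA] using this
  have hw := kr_wsum N p (fun k => G k * f k / A k) (fun k => G k * f ((k:ℝ)-1) / A ((k:ℝ)-1))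
  have hR : ((N:ℝ)+1) * ∑ k ∈ Finset.range (N+1), (N.choose k : ℝ) * p^k * (1-p)^(N-k) *
      ((1-p) * (G k * f k / A k) +
        p * (G ((k+1:ℕ):ℝ) * f (((k+1:ℕ):ℝ)-1) / A (((k+1:ℕ):ℝ)-1)))
      = ((N:ℝ)+1) * (cm * krIP N p n m) := by
    congr 1
    unfold krIP
    rw [Finset.mul_sum]
    apply Finset.sum_congr rfl
    intro k hk
    have hk' := Finset.mem_range.1 hk
    have h0 := hA0 k (by omega)
    have e : ((k+1:ℕ):ℝ) = (k:ℝ)+1 := by push_cast; ring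
    have h1 : (1-p) * G k + p * G ((k:ℝ)+1) = cm * A k * g k := by
      have d1 := kr_diff m p N k
      have d2 := kr_diff d p (-(N:ℝ)-2) ((k:ℝ) - N - 1)
      have e1 : (k:ℝ) - N - 1 + 1 = (k:ℝ) + 1 - N - 1 := by ring
      have e2 : (k:ℝ) - N - 1 - 1 = (k:ℝ) - 1 - N - 1 := by ring
      rw [e1, e2] at d2
      simp only [G, add_sub_cancel_right]
      simp only [hA, hg, hcm]
      linear_combination (A k) * d1 - g k * d2
    rw [e, add_sub_cancel_right]
    change _ = cm * (_ * (f k * g k))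
    have : (1-p) * (G k * f k / A k) + p * (G ((k:ℝ)+1) * f k / A k) = cm * (f k * g k) := by
      field_simp
      linear_combination f k * h1
    rw [this]; ring
  rw [hR, krIP_eq N p n m hnN hmN] at hw
  rw [kr_Icc_sum]
  have hL : ∀ k ∈ Finset.range (N+2),
      (((N + 1).choose ((k:ℤ) - 1 + 1).toNat : ℝ) * p ^ ((k:ℤ) - 1 + 1).toNat *
              (1 - p) ^ ((N : ℤ) - ((k:ℤ) - 1)).toNat /
            (Polynomial.eval ((((k:ℤ) - 1 : ℤ) : ℝ) - N - 1) (kraw d p (-(N : ℝ) - 2)) *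
              Polynomial.eval ((((k:ℤ) - 1 : ℤ) : ℝ) - N) (kraw d p (-(N : ℝ) - 2)))) *
          Polynomial.eval (((k:ℤ) - 1 : ℤ) : ℝ) (xkraw2 d n p (N : ℝ)) *
          Polynomial.eval (((k:ℤ) - 1 : ℤ) : ℝ) (xkraw2 d m p (N : ℝ)) =
      (1 / cn) * (1 / cm) * (((N+1).choose k : ℝ) * p^k * (1-p)^(N+1-k) *
      (((N:ℝ)+1-k) * (G k * f k / A k) + k * (G k * f ((k:ℝ)-1) / A ((k:ℝ)-1)))) := by
    intro k hk
    have hk' := Finset.mem_range.1 hk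
    have h0 := hA0 k (by omega)
    have h1 := hA1 k (by omega)
    have e1 : ((k:ℤ) - 1 + 1).toNat = k := by omega
    have e2 : ((N : ℤ) - ((k:ℤ) - 1)).toNat = N + 1 - k := by omega
    have e3 : (((k:ℤ) - 1 : ℤ) : ℝ) = (k:ℝ) - 1 := by push_cast; ring
    rw [e1, e2, e3, kr_xeval, kr_xeval, ← hcn, ← hcm]
    have e4 : (k:ℝ) - 1 - N = k - N - 1 := by ring
    have e5 : (k:ℝ) - 1 - (N + 1) = (k:ℝ) - 1 - N - 1 := by ring
    rw [e4, e5, sub_add_cancel]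
    have e6 : (k:ℝ) - N - 1 - 1 = (k:ℝ) - 1 - N - 1 := by ring
    try rw [e6]
    change _ / (A ((k:ℝ)-1) * A k) *
      (1 / cn * (((N:ℝ) - (k-1)) * A ((k:ℝ)-1) * f k + k * A k * f ((k:ℝ)-1))) *
      (1 / cm * (((N:ℝ) - (k-1)) * A ((k:ℝ)-1) * g k + k * A k * g ((k:ℝ)-1))) = _
    have hG : ((N:ℝ) - (k-1)) * A ((k:ℝ)-1) * g k + k * A k * g ((k:ℝ)-1) = G k := by
      simp only [G]; ring
    rw [hG]
    generalize G k = Gk at *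
    generalize A k = a at *
    generalize A ((k:ℝ)-1) = b at *
    generalize f k = u at *
    generalize f ((k:ℝ)-1) = v at *
    field_simp
    ring
  rw [Finset.sum_congr rfl hL, ← Finset.mul_sum, hw]
  field_simp
end
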